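/- Let I be the right ideal of R = ℂ[G] consisting of all elements of the form (T − 1)²·r + S·(T − 1)²·r′ with r, r′ ∈ R. Then for each ε ∈ {+1, −1} and every r ∈ R: (S − ε·1)·r ∈ I if and only if there exist a, b ∈ R with r = (S + ε·1)·a + (T − 1)²·b. That is, I_ε = {r ∈ R : (S − ε)·r ∈ I}, where I_ε denotes the right ideal (S + ε)·R + (T − 1)²·R. -/

import Mathlib

open scoped MatrixGroups

/-- `PSL₂(ℤ)`: the quotient of `SL₂(ℤ)` by its center `{±I}`. -/
abbrev PSL2Z : Type :=
  Matrix.SpecialLinearGroup (Fin 2) ℤ ⧸ Subgroup.center (Matrix.SpecialLinearGroup (Fin 2) ℤ)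

/-- The image of `T = [[1,1],[0,1]]` in `PSL₂(ℤ)`. -/
def Tg : PSL2Z := QuotientGroup.mk ModularGroup.T

/-- The image of `S = [[0,-1],[1,0]]` in `PSL₂(ℤ)`. -/
def Sg : PSL2Z := QuotientGroup.mk ModularGroup.S

/-- The element `x = S` of `PSL₂(ℤ)`. -/
def xg : PSL2Z := Sg

/-- The element `y = S·T` of `PSL₂(ℤ)`. -/
def yg : PSL2Z := Sg * Tg

/-- The embedding of the group `PSL₂(ℤ)` into its complex group algebra. -/
noncomputable def ofG : PSL2Z → MonoidAlgebra ℂ PSL2Z := MonoidAlgebra.of ℂ PSL2Z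

/-!
Put `P = (T - 1)²`. Everything rests on `P R ∩ S P R = 0`, which for `S² = 1` reduces the claim to
algebra, because `ker (S - ε) = im (S + ε)`.

Suppose `v = P w` is nonzero and `S v ∈ P R`. Along any coset `⟨T⟩ g` meeting its support, `v` is a
second difference of a finitely supported sequence, so it is nonzero at two points whose exponents
of `T` differ by at least two, and the same holds for `S v`. Measure group elements by the squared
norm `c² + d²` of their bottom row and take `g` of largest norm in the union of the two supports.
If `g` has rows `p` and `q`, then `S T ^ n g` has bottom row `p + n q`; since `p` and `q` are
independent, two of these vectors with exponents at least two apart cannot both be as short as `q`,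
contradicting the choice of `g`.
-/

section Involution

variable {K A : Type*} [CommRing K] [Ring A] [Algebra K A] {s : A} {ε : K}

lemma sub_smul_one_mul_add_smul_one (hs : s * s = 1) (hε : ε * ε = 1) :
    (s - ε • 1) * (s + ε • 1) = 0 := by
  simp [mul_add, sub_mul, smul_sub, smul_smul, hs, hε]

lemma add_smul_one_mul_sub_smul_one (hs : s * s = 1) (hε : ε * ε = 1) :
    (s + ε • 1) * (s - ε • 1) = 0 := by
  simp [mul_sub, add_mul, smul_add, smul_smul, hs, hε, add_comm]

lemma sub_smul_one_mul_eq_zero_iff [Invertible (2 : K)] (hs : s * s = 1) (hε : ε * ε = 1) (q : A) :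
    (s - ε • 1) * q = 0 ↔ ∃ a, q = (s + ε • 1) * a := by
  constructor
  · intro hq
    have hsq : s * q = ε • q := by simpa [sub_mul, sub_eq_zero] using hq
    refine ⟨(⅟2 * ε) • q, ?_⟩
    calc
      q = (⅟2 * 2 * (ε * ε)) • q := by simp [hε]
      _ = (s + ε • 1) * (⅟2 * ε) • q := by
        simp only [add_mul, mul_smul_comm, smul_mul_assoc, one_mul, hsq]
        module
  · rintro ⟨a, rfl⟩
    rw [← mul_assoc, sub_smul_one_mul_add_smul_one hs hε, zero_mul]

theorem exists_sub_smul_one_mul_eq_iff [Invertible (2 : K)] (hs : s * s = 1) (hε : ε * ε = 1)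
    {P : A} (hP : ∀ x y, P * x = s * (P * y) → P * x = 0) (r : A) :
    (∃ u u', (s - ε • 1) * r = P * u + s * P * u') ↔ ∃ a b, r = (s + ε • 1) * a + P * b := by
  constructor
  · rintro ⟨u, u', hr⟩
    have hcancel : P * (ε • u + u') + s * (P * (u + ε • u')) = 0 := by
      have hr' := congrArg ((s + ε • 1) * ·) hr
      simp only [← mul_assoc, add_smul_one_mul_sub_smul_one hs hε, zero_mul] at hr'
      rw [hr']
      simp only [mul_add, add_mul, ← mul_assoc, hs, one_mul, mul_smul_comm, smul_mul_assoc]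
      abel
    have hPu : P * (ε • u + u') = 0 :=
      hP _ (-(u + ε • u')) (by rw [mul_neg, mul_neg]; exact eq_neg_of_add_eq_zero_left hcancel)
    have hPu' : P * u = -(ε • (P * u')) := by
      have h := congrArg (ε • ·) hPu
      simp only [mul_add, mul_smul_comm, smul_add, smul_smul, hε, one_smul, smul_zero] at h
      exact eq_neg_of_add_eq_zero_left h
    have hker : (s - ε • 1) * (r - P * u') = 0 := by
      rw [mul_sub, hr, hPu', sub_mul, smul_mul_assoc, one_mul, mul_assoc]
      abel
    obtain ⟨a, ha⟩ := (sub_smul_one_mul_eq_zero_iff hs hε _).1 hker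
    exact ⟨a, u', sub_eq_iff_eq_add.1 ha⟩
  · rintro ⟨a, b, rfl⟩
    refine ⟨-(ε • b), b, ?_⟩
    rw [mul_add, ← mul_assoc, sub_smul_one_mul_add_smul_one hs hε, zero_mul, sub_mul,
      smul_mul_assoc, one_mul, mul_neg, mul_smul_comm, ← mul_assoc]
    abel

end Involution

section GroupAlgebra

variable {k G : Type*} [Ring k] [Group G] {t : G}

lemma coeff_of_mul (g x : G) (w : MonoidAlgebra k G) :
    (MonoidAlgebra.of k G g * w).coeff x = w.coeff (g⁻¹ * x) := by
  simp [MonoidAlgebra.of_apply]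

lemma coeff_of_sub_one_mul (g x : G) (w : MonoidAlgebra k G) :
    ((MonoidAlgebra.of k G g - 1) * w).coeff x = w.coeff (g⁻¹ * x) - w.coeff x := by
  rw [sub_mul, one_mul, MonoidAlgebra.coeff_sub, Finsupp.sub_apply, coeff_of_mul]

lemma finite_setOf_coeff_zpow_mul_ne_zero (ht : ¬IsOfFinOrder t) (w : MonoidAlgebra k G) (g : G) :
    {n : ℤ | w.coeff (t ^ n * g) ≠ 0}.Finite := by
  have hinj : Function.Injective fun n : ℤ ↦ t ^ n * g :=
    (mul_left_injective g).comp (injective_zpow_iff_not_isOfFinOrder.2 ht)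
  exact w.coeff.hasFiniteSupport.preimage hinj.injOn

lemma exists_le_coeff_of_sub_one_mul_ne_zero (ht : ¬IsOfFinOrder t) {w : MonoidAlgebra k G} {g : G}
    {m : ℤ} (hm : w.coeff (t ^ m * g) ≠ 0) :
    ∃ i ≤ m, ((MonoidAlgebra.of k G t - 1) * w).coeff (t ^ i * g) ≠ 0 := by
  obtain ⟨i, him, hi⟩ := (finite_setOf_coeff_zpow_mul_ne_zero ht w g).exists_le_minimal hm
  have hpred : w.coeff (t ^ (i - 1) * g) = 0 := by
    by_contra h
    exact hi.not_prop_of_lt (sub_one_lt i) h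
  refine ⟨i, him, ?_⟩
  rw [coeff_of_sub_one_mul, ← mul_assoc, ← zpow_neg_one, ← zpow_add, neg_add_eq_sub, hpred,
    zero_sub]
  exact neg_ne_zero.2 hi.prop

lemma exists_lt_coeff_of_sub_one_mul_ne_zero (ht : ¬IsOfFinOrder t) {w : MonoidAlgebra k G} {g : G}
    {n : ℤ} (hn : w.coeff (t ^ n * g) ≠ 0) :
    ∃ j > n, ((MonoidAlgebra.of k G t - 1) * w).coeff (t ^ j * g) ≠ 0 := by
  obtain ⟨j, hnj, hj⟩ := (finite_setOf_coeff_zpow_mul_ne_zero ht w g).exists_le_maximal hn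
  have hsucc : w.coeff (t ^ (j + 1) * g) = 0 := by
    by_contra h
    exact hj.not_prop_of_gt (lt_add_one j) h
  refine ⟨j + 1, Int.lt_add_one_of_le hnj, ?_⟩
  rw [coeff_of_sub_one_mul, hsucc, ← mul_assoc, ← zpow_neg_one, ← zpow_add, neg_add_eq_sub,
    add_sub_cancel_right, sub_zero]
  exact hj.prop

theorem exists_add_le_coeff_of_sub_one_pow_mul_ne_zero (ht : ¬IsOfFinOrder t) {d : ℕ}
    {w : MonoidAlgebra k G} {g : G}
    (hg : ((MonoidAlgebra.of k G t - 1) ^ d * w).coeff g ≠ 0) :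
    ∃ m n : ℤ, m + d ≤ n ∧ ((MonoidAlgebra.of k G t - 1) ^ d * w).coeff (t ^ m * g) ≠ 0 ∧
      ((MonoidAlgebra.of k G t - 1) ^ d * w).coeff (t ^ n * g) ≠ 0 := by
  induction d generalizing g with
  | zero => exact ⟨0, 0, by simp, by simpa using hg, by simpa using hg⟩
  | succ d ih =>
    rw [pow_succ', mul_assoc] at hg ⊢
    set v := (MonoidAlgebra.of k G t - 1) ^ d * w
    obtain ⟨m, n, hmn, hm, hn⟩ : ∃ m n : ℤ, m + d ≤ n ∧ v.coeff (t ^ m * g) ≠ 0 ∧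
        v.coeff (t ^ n * g) ≠ 0 := by
      by_cases hvg : v.coeff g = 0
      · rw [coeff_of_sub_one_mul, hvg, sub_zero] at hg
        obtain ⟨m, n, hmn, hm, hn⟩ := ih hg
        rw [← mul_assoc, ← zpow_sub_one] at hm hn
        exact ⟨m - 1, n - 1, by omega, hm, hn⟩
      · exact ih hvg
    obtain ⟨i, him, hi⟩ := exists_le_coeff_of_sub_one_mul_ne_zero ht hm
    obtain ⟨j, hnj, hj⟩ := exists_lt_coeff_of_sub_one_mul_ne_zero ht hn
    exact ⟨i, j, by push_cast; omega, hi, hj⟩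

theorem of_sub_one_pow_mul_eq_zero_of_height {α : Type*} [LinearOrder α] {s : G} {d : ℕ}
    (hs : s * s = 1) (ht : ¬IsOfFinOrder t) (height : G → α)
    (hheight : ∀ (g : G) {m n : ℤ}, m + d ≤ n → height (s * (t ^ m * g)) ≤ height g →
      height g < height (s * (t ^ n * g)))
    {w w' : MonoidAlgebra k G}
    (h : (MonoidAlgebra.of k G t - 1) ^ d * w =
      MonoidAlgebra.of k G s * ((MonoidAlgebra.of k G t - 1) ^ d * w')) :
    (MonoidAlgebra.of k G t - 1) ^ d * w = 0 := by
  classical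
  set v := (MonoidAlgebra.of k G t - 1) ^ d * w with hv
  set v' := (MonoidAlgebra.of k G t - 1) ^ d * w' with hv'
  have hsv (x : G) : v.coeff (s * x) = v'.coeff x := by
    rw [h, coeff_of_mul, inv_mul_cancel_left]
  have hsv' (x : G) : v'.coeff (s * x) = v.coeff x := by
    rw [← hsv, ← mul_assoc, hs, one_mul]
  by_contra hne
  have hnonempty : (v.coeff.support ∪ v'.coeff.support).Nonempty :=
    (Finsupp.support_nonempty_iff.2 (by simpa using hne)).mono Finset.subset_union_left
  obtain ⟨g, hg, hmax⟩ := Finset.exists_max_image _ height hnonempty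
  simp only [Finset.mem_union, Finsupp.mem_support_iff] at hg hmax
  rcases hg with hg | hg
  · obtain ⟨m, n, hmn, hm, hn⟩ := exists_add_le_coeff_of_sub_one_pow_mul_ne_zero ht hg
    rw [← hv, ← hsv'] at hm hn
    exact (hheight g hmn (hmax _ (.inr hm))).not_ge (hmax _ (.inr hn))
  · obtain ⟨m, n, hmn, hm, hn⟩ := exists_add_le_coeff_of_sub_one_pow_mul_ne_zero ht hg
    rw [← hv', ← hsv] at hm hn
    exact (hheight g hmn (hmax _ (.inl hm))).not_ge (hmax _ (.inl hn))

end GroupAlgebra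

lemma sq_add_sq_lt_of_two_le {R : Type*} [CommRing R] [LinearOrder R] [IsStrictOrderedRing R]
    {x y c d k : R} (hdet : x * d - y * c ≠ 0) (hk : 2 ≤ k) (hxy : x ^ 2 + y ^ 2 ≤ c ^ 2 + d ^ 2) :
    c ^ 2 + d ^ 2 < (x + k * c) ^ 2 + (y + k * d) ^ 2 := by
  have hpos : 0 < (2 * x + k * c) ^ 2 + (2 * y + k * d) ^ 2 := by
    refine lt_of_le_of_ne (by positivity) fun h ↦ hdet ?_
    rw [sq, sq, eq_comm, mul_self_add_mul_self_eq_zero] at h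
    have h2 : 2 * (x * d - y * c) = 0 := by linear_combination d * h.1 - c * h.2
    simpa using h2
  have hparallelogram : 2 * (x ^ 2 + y ^ 2) + 2 * ((x + k * c) ^ 2 + (y + k * d) ^ 2) =
      k ^ 2 * (c ^ 2 + d ^ 2) + ((2 * x + k * c) ^ 2 + (2 * y + k * d) ^ 2) := by ring
  have hk4 : 2 ^ 2 * (c ^ 2 + d ^ 2) ≤ k ^ 2 * (c ^ 2 + d ^ 2) := by gcongr
  linarith [hparallelogram]

section ModularGroup

lemma Sg_mul_Sg : Sg * Sg = 1 := by
  change (QuotientGroup.mk (ModularGroup.S * ModularGroup.S) : PSL2Z) = 1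
  rw [QuotientGroup.eq_one_iff, Matrix.SpecialLinearGroup.mem_center_iff]
  exact ⟨-1, by simp, by simp [Matrix.SpecialLinearGroup.coe_mul, ModularGroup.S_mul_S_eq,
    -ModularGroup.coe_S]⟩

lemma not_isOfFinOrder_Tg : ¬IsOfFinOrder Tg := by
  rw [isOfFinOrder_iff_zpow_eq_one]
  rintro ⟨n, hn, hTn⟩
  change (QuotientGroup.mk (ModularGroup.T ^ n) : PSL2Z) = 1 at hTn
  rw [QuotientGroup.eq_one_iff, Matrix.SpecialLinearGroup.mem_center_iff] at hTn
  obtain ⟨r, -, hr⟩ := hTn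
  have hentry := congrFun₂ hr 0 1
  rw [Matrix.scalar_apply, Matrix.diagonal_apply_ne _ zero_ne_one, ModularGroup.coe_T_zpow]
    at hentry
  exact hn hentry.symm

/-- The squared norm `c² + d²` of the bottom row `(c, d)` of a matrix representing an element of
`PSL₂(ℤ)`; it equals `1 / Im (g • i)`. It is the height by which supports in the group algebra
are compared. -/
def bottomRowNormSq : PSL2Z → ℤ :=
  Quotient.lift (fun A ↦ A 1 0 ^ 2 + A 1 1 ^ 2) fun A B hAB ↦ by
    obtain ⟨r, hr, hrAB⟩ :=
      Matrix.SpecialLinearGroup.mem_center_iff.1 (QuotientGroup.leftRel_apply.1 hAB)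
    have hB : (B : Matrix (Fin 2) (Fin 2) ℤ) = A * Matrix.scalar (Fin 2) r := by
      rw [hrAB, ← Matrix.SpecialLinearGroup.coe_mul, mul_inv_cancel_left]
    rw [Fintype.card_fin] at hr
    simp only [hB, Matrix.scalar_apply, Matrix.mul_diagonal, mul_pow, hr, mul_one]

lemma bottomRowNormSq_Sg_mul_Tg_zpow_mul (n : ℤ) (A : Matrix.SpecialLinearGroup (Fin 2) ℤ) :
    bottomRowNormSq (Sg * (Tg ^ n * QuotientGroup.mk A)) =
      (A 0 0 + n * A 1 0) ^ 2 + (A 0 1 + n * A 1 1) ^ 2 := by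
  change (ModularGroup.S * (ModularGroup.T ^ n * A)) 1 0 ^ 2 +
    (ModularGroup.S * (ModularGroup.T ^ n * A)) 1 1 ^ 2 = _
  simp [ModularGroup.coe_T_zpow, ModularGroup.coe_S, Matrix.mul_apply, Matrix.vecMul, dotProduct,
    Fin.sum_univ_two]

lemma bottomRowNormSq_lt_of_add_two_le (g : PSL2Z) {m n : ℤ} (hmn : m + 2 ≤ n)
    (hm : bottomRowNormSq (Sg * (Tg ^ m * g)) ≤ bottomRowNormSq g) :
    bottomRowNormSq g < bottomRowNormSq (Sg * (Tg ^ n * g)) := by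
  obtain ⟨A, rfl⟩ := QuotientGroup.mk_surjective g
  rw [bottomRowNormSq_Sg_mul_Tg_zpow_mul] at hm ⊢
  have hdet : (A 0 0 + m * A 1 0) * A 1 1 - (A 0 1 + m * A 1 1) * A 1 0 = 1 := by
    have h := A.det_coe
    rw [Matrix.det_fin_two] at h
    linear_combination h
  refine (sq_add_sq_lt_of_two_le (by simp [hdet]) (le_sub_iff_add_le'.2 hmn) hm).trans_eq ?_
  ring

end ModularGroup

theorem ideal_eps_characterization_general {k : Type*} [CommRing k] [Invertible (2 : k)] {ε : k}
    (hε : ε * ε = 1) {d : ℕ} (hd : 2 ≤ d) (r : MonoidAlgebra k PSL2Z) :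
    (∃ u u' : MonoidAlgebra k PSL2Z, (MonoidAlgebra.of k PSL2Z Sg - ε • 1) * r =
        (MonoidAlgebra.of k PSL2Z Tg - 1) ^ d * u +
          MonoidAlgebra.of k PSL2Z Sg * (MonoidAlgebra.of k PSL2Z Tg - 1) ^ d * u') ↔
      ∃ a b : MonoidAlgebra k PSL2Z, r = (MonoidAlgebra.of k PSL2Z Sg + ε • 1) * a +
        (MonoidAlgebra.of k PSL2Z Tg - 1) ^ d * b := by
  have hS : MonoidAlgebra.of k PSL2Z Sg * MonoidAlgebra.of k PSL2Z Sg = 1 := by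
    rw [← map_mul, Sg_mul_Sg, map_one]
  refine exists_sub_smul_one_mul_eq_iff hS hε (fun _ _ h ↦ ?_) r
  exact of_sub_one_pow_mul_eq_zero_of_height Sg_mul_Sg not_isOfFinOrder_Tg bottomRowNormSq
    (fun g _ _ hmn ↦ bottomRowNormSq_lt_of_add_two_le g (by omega)) h

/-- With `𝓘 = (T-1)²R + S(T-1)²R` and `𝓘_ε = (S+ε)R + (T-1)²R` for `ε = ±1`:
`𝓘_ε = {r ∈ R : (S - ε)·r ∈ 𝓘}` in `R = ℂ[PSL₂(ℤ)]`. -/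
theorem ideal_eps_characterization (ε : ℂ) (hε : ε = 1 ∨ ε = -1)
    (r : MonoidAlgebra ℂ PSL2Z) :
    (∃ u u' : MonoidAlgebra ℂ PSL2Z,
      (ofG Sg - ε • 1) * r = (ofG Tg - 1) ^ 2 * u + ofG Sg * (ofG Tg - 1) ^ 2 * u') ↔
    (∃ a b : MonoidAlgebra ℂ PSL2Z,
      r = (ofG Sg + ε • 1) * a + (ofG Tg - 1) ^ 2 * b) :=
  ideal_eps_characterization_general (mul_self_eq_one_iff.2 hε) le_rfl r
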